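/- Let k be a field of characteristic different from 2, let q₁, q₂, q₃ ∈ k[x,z] be binary quadratic forms, and let f ∈ k[x,z] be any binary quadratic form. Then R(q₁,q₂,q₃)·f = 2·((f,q₁)₂·q₁* + (f,q₂)₂·q₂* + (f,q₃)₂·q₃*), where the second transvectants (f,q_i)₂ are constants. -/

import Mathlib

/-!
Identify binary quadratic forms with their coefficient vectors in `k³`. The second transvectant is
a nondegenerate symmetric bilinear pairing, `(f, q)₂ = D f ⬝ q` for a linear automorphism `D`, and
the first transvectant is a cross product, `2 (q, q')₁ = D⁻¹ (q × q')`. The theorem is thus the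
image under `D⁻¹` of the expansion
`(u ⬝ v × w) y = (y ⬝ u) v × w + (y ⬝ v) w × u + (y ⬝ w) u × v` in `k³`, taken at `y = D f`.
-/

open MvPolynomial

/-- Iterated partial derivative in the variable `x` (the variable `0`). -/
noncomputable def dX {k : Type*} [CommSemiring k] (n : ℕ) (p : MvPolynomial (Fin 2) k) :
    MvPolynomial (Fin 2) k :=
  (fun q => pderiv (0 : Fin 2) q)^[n] p

/-- Iterated partial derivative in the variable `z` (the variable `1`). -/
noncomputable def dZ {k : Type*} [CommSemiring k] (n : ℕ) (p : MvPolynomial (Fin 2) k) :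
    MvPolynomial (Fin 2) k :=
  (fun q => pderiv (1 : Fin 2) q)^[n] p

/-- The `h`-th transvectant of two binary forms of degrees `r₁` and `r₂`. -/
noncomputable def transvectant {k : Type*} [Field k] (r₁ r₂ h : ℕ)
    (f g : MvPolynomial (Fin 2) k) : MvPolynomial (Fin 2) k :=
  C ((((r₁ - h).factorial * (r₂ - h).factorial : ℕ) : k) /
      (((r₁.factorial * r₂.factorial : ℕ)) : k)) *
    ∑ j ∈ Finset.range (h + 1),
      C ((-1 : k) ^ j * (h.choose j : k)) * (dX (h - j) (dZ j f) * dX j (dZ (h - j) g))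

/-- The determinant `R(q₁,q₂,q₃)` of three binary quadratic forms in the basis `x², xz, z²`. -/
noncomputable def Rdet {k : Type*} [CommRing k] (q₁ q₂ q₃ : MvPolynomial (Fin 2) k) : k :=
  Matrix.det
    !![coeff (Finsupp.single 0 2) q₁, coeff (Finsupp.single 0 1 + Finsupp.single 1 1) q₁,
         coeff (Finsupp.single 1 2) q₁;
       coeff (Finsupp.single 0 2) q₂, coeff (Finsupp.single 0 1 + Finsupp.single 1 1) q₂,
         coeff (Finsupp.single 1 2) q₂;
       coeff (Finsupp.single 0 2) q₃, coeff (Finsupp.single 0 1 + Finsupp.single 1 1) q₃,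
         coeff (Finsupp.single 1 2) q₃]

open scoped Matrix

/-- The exponents of the monomials `x²`, `xz`, `z²`, in the order of the columns of `Rdet`. -/
noncomputable def quadraticExponent : Fin 3 → Fin 2 →₀ ℕ :=
  ![.single 0 2, .single 0 1 + .single 1 1, .single 1 2]

lemma quadraticExponent_injective : Function.Injective quadraticExponent := by
  have apply_one (i : Fin 3) : quadraticExponent i 1 = i := by
    fin_cases i <;> simp [quadraticExponent]
  intro i j hij
  rw [Fin.ext_iff, ← apply_one, ← apply_one, hij]

lemma range_quadraticExponent :
    Set.range quadraticExponent = {m : Fin 2 →₀ ℕ | m.degree = 2} := by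
  ext m
  have hdegree : m.degree = m 0 + m 1 := by rw [Finsupp.degree_eq_sum, Fin.sum_univ_two]
  rw [Set.mem_ofPred_eq, hdegree]
  constructor
  · rintro ⟨i, rfl⟩
    fin_cases i <;> simp [quadraticExponent]
  · intro hm
    obtain h | h | h : (m 0 = 2 ∧ m 1 = 0) ∨ (m 0 = 1 ∧ m 1 = 1) ∨ (m 0 = 0 ∧ m 1 = 2) := by
      omega
    · exact ⟨0, by simp [quadraticExponent, Finsupp.ext_iff, h]⟩
    · exact ⟨1, by simp [quadraticExponent, Finsupp.ext_iff, h]⟩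
    · exact ⟨2, by simp [quadraticExponent, Finsupp.ext_iff, h]⟩

section CommSemiring

variable {R : Type*} [CommSemiring R]

/-- The binary quadratic form `v₀x² + v₁xz + v₂z²`, as a linear function of its coefficient
vector `v`. -/
noncomputable def binaryQuadratic : (Fin 3 → R) →ₗ[R] MvPolynomial (Fin 2) R :=
  Fintype.linearCombination R fun i => monomial (quadraticExponent i) 1

lemma binaryQuadratic_apply (v : Fin 3 → R) :
    binaryQuadratic v = C (v 0) * X 0 ^ 2 + C (v 1) * (X 0 * X 1) + C (v 2) * X 1 ^ 2 := by
  simp [binaryQuadratic, Fintype.linearCombination_apply, Fin.sum_univ_three, quadraticExponent,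
    X, monomial_pow, monomial_mul, C_mul_monomial, smul_monomial]

lemma coeff_binaryQuadratic (v : Fin 3 → R) (i : Fin 3) :
    coeff (quadraticExponent i) (binaryQuadratic v) = v i := by
  simp [binaryQuadratic, Fintype.linearCombination_apply, coeff_sum, coeff_monomial,
    quadraticExponent_injective.eq_iff]

lemma binaryQuadratic_coeff {q : MvPolynomial (Fin 2) R} (hq : q.IsHomogeneous 2) :
    binaryQuadratic (fun i => coeff (quadraticExponent i) q) = q := by
  ext m
  by_cases hm : m ∈ Set.range quadraticExponent
  · obtain ⟨i, rfl⟩ := hm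
    exact coeff_binaryQuadratic _ i
  · have hne (i : Fin 3) : quadraticExponent i ≠ m := fun h => hm ⟨i, h⟩
    rw [hq.coeff_eq_zero (by rwa [range_quadraticExponent] at hm)]
    simp [binaryQuadratic, Fintype.linearCombination_apply, coeff_sum, coeff_monomial, hne]

lemma pderiv_zero_binaryQuadratic (v : Fin 3 → R) :
    pderiv 0 (binaryQuadratic v) = C (2 * v 0) * X 0 + C (v 1) * X 1 := by
  simp only [binaryQuadratic_apply, map_add, pderiv_mul, pderiv_C, pderiv_pow, pderiv_X_self,
    pderiv_X_of_ne one_ne_zero, C_mul, map_ofNat]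
  ring

lemma pderiv_one_binaryQuadratic (v : Fin 3 → R) :
    pderiv 1 (binaryQuadratic v) = C (v 1) * X 0 + C (2 * v 2) * X 1 := by
  simp only [binaryQuadratic_apply, map_add, pderiv_mul, pderiv_C, pderiv_pow, pderiv_X_self,
    pderiv_X_of_ne zero_ne_one, C_mul, map_ofNat]
  ring

end CommSemiring

section CommRing

variable {R : Type*} [CommRing R]

lemma Rdet_binaryQuadratic (u v w : Fin 3 → R) :
    Rdet (binaryQuadratic u) (binaryQuadratic v) (binaryQuadratic w) = u ⬝ᵥ v ⨯₃ w := by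
  have coeffs (y : Fin 3 → R) : ![coeff (.single 0 2) (binaryQuadratic y),
      coeff (.single 0 1 + .single 1 1) (binaryQuadratic y),
      coeff (.single 1 2) (binaryQuadratic y)] = y := by
    ext i
    rw [← coeff_binaryQuadratic y i]
    fin_cases i <;> rfl
  rw [Rdet, coeffs, coeffs, coeffs, triple_product_eq_det]
  rfl

lemma triple_product_smul_eq (u v w x : Fin 3 → R) :
    (u ⬝ᵥ v ⨯₃ w) • x = (x ⬝ᵥ u) • (v ⨯₃ w) + (x ⬝ᵥ v) • (w ⨯₃ u) + (x ⬝ᵥ w) • (u ⨯₃ v) := by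
  ext i
  simp only [cross_apply, Matrix.vec3_dotProduct, Pi.add_apply, Pi.smul_apply, smul_eq_mul]
  fin_cases i <;> simp only [Fin.zero_eta, Fin.mk_one, Fin.reduceFinMk, Matrix.cons_val] <;> ring

lemma jacobian_binaryQuadratic (u v : Fin 3 → R) :
    pderiv 0 (binaryQuadratic u) * pderiv 1 (binaryQuadratic v) -
        pderiv 1 (binaryQuadratic u) * pderiv 0 (binaryQuadratic v) =
      2 * binaryQuadratic ![(u ⨯₃ v) 2, -2 * (u ⨯₃ v) 1, (u ⨯₃ v) 0] := by
  simp only [pderiv_zero_binaryQuadratic, pderiv_one_binaryQuadratic]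
  simp only [binaryQuadratic_apply, cross_apply, Matrix.cons_val, map_sub, map_neg, map_mul,
    map_ofNat]
  ring

lemma hessian_pairing_binaryQuadratic (u v : Fin 3 → R) :
    pderiv 0 (pderiv 0 (binaryQuadratic u)) * pderiv 1 (pderiv 1 (binaryQuadratic v)) -
          2 * (pderiv 0 (pderiv 1 (binaryQuadratic u)) * pderiv 0 (pderiv 1 (binaryQuadratic v))) +
        pderiv 1 (pderiv 1 (binaryQuadratic u)) * pderiv 0 (pderiv 0 (binaryQuadratic v)) =
      C (4 * (u 2 * v 0) - 2 * (u 1 * v 1) + 4 * (u 0 * v 2)) := by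
  simp only [pderiv_zero_binaryQuadratic, pderiv_one_binaryQuadratic, map_add, pderiv_C_mul,
    pderiv_X_self, pderiv_X_of_ne zero_ne_one, pderiv_X_of_ne one_ne_zero]
  simp only [map_sub, map_mul, map_ofNat]
  ring

end CommRing

section Field

variable {k : Type*} [Field k]

lemma transvectant_one (r₁ r₂ : ℕ) (f g : MvPolynomial (Fin 2) k) :
    transvectant r₁ r₂ 1 f g =
      C ((((r₁ - 1).factorial * (r₂ - 1).factorial : ℕ) : k) /
          ((r₁.factorial * r₂.factorial : ℕ) : k)) *
        (pderiv 0 f * pderiv 1 g - pderiv 1 f * pderiv 0 g) := by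
  simp [transvectant, dX, dZ, Finset.sum_range_succ, sub_eq_add_neg]

lemma transvectant_two (r₁ r₂ : ℕ) (f g : MvPolynomial (Fin 2) k) :
    transvectant r₁ r₂ 2 f g =
      C ((((r₁ - 2).factorial * (r₂ - 2).factorial : ℕ) : k) /
          ((r₁.factorial * r₂.factorial : ℕ) : k)) *
        (pderiv 0 (pderiv 0 f) * pderiv 1 (pderiv 1 g) -
            2 * (pderiv 0 (pderiv 1 f) * pderiv 0 (pderiv 1 g)) +
          pderiv 1 (pderiv 1 f) * pderiv 0 (pderiv 0 g)) := by
  simp [transvectant, dX, dZ, Finset.sum_range_succ, sub_eq_add_neg]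

variable [NeZero (2 : k)]

/-- The self-duality of the space of binary quadratic forms given by the second transvectant:
in coefficient vectors, `(f, q)₂` is the dot product of `apolarDual f` with `q`. -/
def apolarDual : (Fin 3 → k) ≃ₗ[k] (Fin 3 → k) where
  toFun u := ![u 2, -(u 1 / 2), u 0]
  invFun w := ![w 2, -2 * w 1, w 0]
  map_add' u v := by
    ext i; fin_cases i <;> simp [add_div, add_comm]
  map_smul' c u := by
    ext i; fin_cases i <;> simp [mul_div_assoc]
  left_inv u := by
    ext i; fin_cases i <;> simp [mul_div_cancel₀ _ (two_ne_zero' k)]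
  right_inv w := by
    ext i; fin_cases i <;> simp [neg_div, mul_div_cancel_left₀ _ (two_ne_zero' k)]

lemma transvectant_two_binaryQuadratic (u v : Fin 3 → k) :
    transvectant 2 2 2 (binaryQuadratic u) (binaryQuadratic v) = C (apolarDual u ⬝ᵥ v) := by
  have hdual : apolarDual u ⬝ᵥ v =
      1 / 2 ^ 2 * (4 * (u 2 * v 0) - 2 * (u 1 * v 1) + 4 * (u 0 * v 2)) := by
    rw [Matrix.vec3_dotProduct]
    simp only [apolarDual, LinearEquiv.coe_mk, LinearMap.coe_mk, AddHom.coe_mk, Matrix.cons_val]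
    field_simp
    ring
  rw [transvectant_two, hessian_pairing_binaryQuadratic, ← C_mul, hdual]
  norm_num

lemma two_mul_transvectant_one_binaryQuadratic (u v : Fin 3 → k) :
    2 * transvectant 2 2 1 (binaryQuadratic u) (binaryQuadratic v) =
      binaryQuadratic (apolarDual.symm (u ⨯₃ v)) := by
  have hquarter : (2 : k) * (1 / 4) * 2 = 1 := by
    have hfour : (4 : k) = 2 ^ 2 := by norm_num
    rw [hfour]
    field_simp
  have hC : (2 : MvPolynomial (Fin 2) k) * C (1 / 4) * 2 = 1 := by
    rw [← map_ofNat C 2, ← C_mul, ← C_mul, hquarter, C_1]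
  calc 2 * transvectant 2 2 1 (binaryQuadratic u) (binaryQuadratic v)
      = 2 * (C (1 / 4) * (2 * binaryQuadratic (apolarDual.symm (u ⨯₃ v)))) := by
        rw [transvectant_one, jacobian_binaryQuadratic]
        norm_num [apolarDual]
    _ = binaryQuadratic (apolarDual.symm (u ⨯₃ v)) := by
        rw [← mul_assoc, ← mul_assoc, hC, one_mul]

end Field

/-- For binary quadratic forms `q₁,q₂,q₃` over a field of characteristic `≠ 2` and any binary
quadratic form `f`, `R(q₁,q₂,q₃)·f = 2·((f,q₁)₂·q₁* + (f,q₂)₂·q₂* + (f,q₃)₂·q₃*)`, where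
`q₁* = (q₂,q₃)₁`, `q₂* = (q₃,q₁)₁`, `q₃* = (q₁,q₂)₁` and the `(f,qᵢ)₂` are constants. -/
theorem statement6 {k : Type*} [Field k] (hchar : (2 : k) ≠ 0)
    (q₁ q₂ q₃ : MvPolynomial (Fin 2) k)
    (h₁ : q₁.IsHomogeneous 2) (h₂ : q₂.IsHomogeneous 2) (h₃ : q₃.IsHomogeneous 2)
    (f : MvPolynomial (Fin 2) k) (hf : f.IsHomogeneous 2) :
    C (Rdet q₁ q₂ q₃) * f =
      2 * (C (constantCoeff (transvectant 2 2 2 f q₁)) * transvectant 2 2 1 q₂ q₃ +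
           C (constantCoeff (transvectant 2 2 2 f q₂)) * transvectant 2 2 1 q₃ q₁ +
           C (constantCoeff (transvectant 2 2 2 f q₃)) * transvectant 2 2 1 q₁ q₂) := by
  have : NeZero (2 : k) := ⟨hchar⟩
  obtain ⟨u, rfl⟩ : ∃ u, binaryQuadratic u = q₁ := ⟨_, binaryQuadratic_coeff h₁⟩
  obtain ⟨v, rfl⟩ : ∃ v, binaryQuadratic v = q₂ := ⟨_, binaryQuadratic_coeff h₂⟩
  obtain ⟨w, rfl⟩ : ∃ w, binaryQuadratic w = q₃ := ⟨_, binaryQuadratic_coeff h₃⟩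
  obtain ⟨x, rfl⟩ : ∃ x, binaryQuadratic x = f := ⟨_, binaryQuadratic_coeff hf⟩
  simp only [Rdet_binaryQuadratic, transvectant_two_binaryQuadratic, constantCoeff_C]
  calc C (u ⬝ᵥ v ⨯₃ w) * binaryQuadratic x
      = binaryQuadratic (apolarDual.symm ((u ⬝ᵥ v ⨯₃ w) • apolarDual x)) := by
        rw [map_smul, LinearEquiv.symm_apply_apply, map_smul, smul_eq_C_mul]
    _ = binaryQuadratic (apolarDual.symm ((apolarDual x ⬝ᵥ u) • (v ⨯₃ w) +
          (apolarDual x ⬝ᵥ v) • (w ⨯₃ u) + (apolarDual x ⬝ᵥ w) • (u ⨯₃ v))) := by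
        rw [triple_product_smul_eq]
    _ = _ := by
        simp only [map_add, map_smul, smul_eq_C_mul, ← two_mul_transvectant_one_binaryQuadratic]
        ring
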